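/- arXiv:1807.11837 — 2 statements merged into one kernel-verified Lean document; each statement's English description precedes it below -/
import Mathlib

section
/- Along the diagonal, the left-focal Green's function satisfies G_l(s, s) ≤ b − a − 2 for every s with a+2 ≤ s ≤ b, with equality at s = a+2. -/
/-- Rising factorial `rf x r = Γ(x+r)/Γ(x)`, with the convention `rf 0 r = 0`. -/
noncomputable def rf (x r : ℝ) : ℝ := if x = 0 then 0 else Real.Gamma (x + r) / Real.Gamma x

/-- The left-focal Green's function. -/
noncomputable def Gl (a b : ℤ) (α : ℝ) (t s : ℤ) : ℝ :=
  if t ≤ s - 1 then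
    (1 / Real.Gamma α) *
      (rf (b - s + 1 : ℝ) (α - 1) * rf (t - a : ℝ) (α - 2) / rf (b - a : ℝ) (α - 2))
  else
    (1 / Real.Gamma α) *
      (rf (b - s + 1 : ℝ) (α - 1) * rf (t - a : ℝ) (α - 2) / rf (b - a : ℝ) (α - 2) -
        rf (t - s + 1 : ℝ) (α - 1))

/-!
On the diagonal the subtracted term of the Green's function is `rf 1 (α - 1) = Γ(α)`, so
`G_l(s, s) = rf (b - s + 1) (α - 1) * rf (s - a) (α - 2) / (Γ(α) * rf (b - a) (α - 2)) - 1`.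
Log-convexity of `Γ` makes `x ↦ rf x r = Γ(x + r) / Γ(x)` increasing for `r ≥ 0` and decreasing for
`r ≤ 0`. Since `α - 2 ≤ 0 ≤ α - 1`, both factors of the numerator decrease in `s`, and `G_l(s, s)`
is largest at `s = a + 2`, where `rf x (r + 1) = x * rf (x + 1) r` evaluates it.
-/

theorem map_add_add_map_le_of_convexOn {𝕜 : Type*} [Field 𝕜] [LinearOrder 𝕜]
    [IsStrictOrderedRing 𝕜] {D : Set 𝕜} {f : 𝕜 → 𝕜} (hf : ConvexOn 𝕜 D f) {x y r : 𝕜}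
    (hx : x ∈ D) (hyr : y + r ∈ D) (hxy : x ≤ y) (hr : 0 ≤ r) :
    f (x + r) + f y ≤ f x + f (y + r) := by
  rcases hr.eq_or_lt with rfl | hr
  · simp
  -- `x + r` and `y` are convex combinations of `x` and `y + r` with the two weights swapped.
  set u := r / (y - x + r) with hu
  set v := (y - x) / (y - x + r) with hv
  have hd : 0 < y - x + r := by linarith
  have hu0 : 0 ≤ u := by positivity
  have hv0 : 0 ≤ v := div_nonneg (sub_nonneg.2 hxy) hd.le
  have huv : v + u = 1 := by rw [hu, hv, ← add_div, div_self hd.ne']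
  have hxr : v * x + u * (y + r) = x + r := by rw [hu, hv]; field_simp; ring
  have hy : u * x + v * (y + r) = y := by rw [hu, hv]; field_simp; ring
  have hfxr := hf.2 hx hyr hv0 hu0 huv
  have hfy := hf.2 hx hyr hu0 hv0 (by rw [add_comm, huv])
  simp only [smul_eq_mul, hxr, hy] at hfxr hfy
  calc f (x + r) + f y ≤ (v * f x + u * f (y + r)) + (u * f x + v * f (y + r)) :=
        add_le_add hfxr hfy
    _ = (v + u) * (f x + f (y + r)) := by ring
    _ = f x + f (y + r) := by rw [huv, one_mul]

-- The case `x = 0` holds because `Real.Gamma 0 = 0` and division by zero gives zero.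
theorem rf_eq_Gamma_div_Gamma (x r : ℝ) : rf x r = Real.Gamma (x + r) / Real.Gamma x := by
  rcases eq_or_ne x 0 with rfl | hx
  · simp [rf]
  · rw [rf, if_neg hx]

theorem rf_pos {x r : ℝ} (hx : 0 < x) (hxr : 0 < x + r) : 0 < rf x r := by
  rw [rf_eq_Gamma_div_Gamma]
  exact div_pos (Real.Gamma_pos_of_pos hxr) (Real.Gamma_pos_of_pos hx)

theorem rf_one_left (r : ℝ) : rf 1 r = Real.Gamma (1 + r) := by
  rw [rf_eq_Gamma_div_Gamma, Real.Gamma_one, div_one]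

theorem rf_two_left (r : ℝ) : rf 2 r = Real.Gamma (2 + r) := by
  rw [rf_eq_Gamma_div_Gamma, Real.Gamma_two, div_one]

theorem rf_add_one_right {x : ℝ} (hx : x ≠ 0) (r : ℝ) : rf x (r + 1) = x * rf (x + 1) r := by
  rw [rf_eq_Gamma_div_Gamma, rf_eq_Gamma_div_Gamma, Real.Gamma_add_one hx, mul_div_assoc',
    mul_div_mul_left _ _ hx, add_right_comm, add_assoc]

theorem rf_eq_inv_rf_neg (x r : ℝ) : rf x r = (rf (x + r) (-r))⁻¹ := by
  rw [rf_eq_Gamma_div_Gamma, rf_eq_Gamma_div_Gamma, inv_div, add_neg_cancel_right]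

theorem monotoneOn_rf_left {r : ℝ} (hr : 0 ≤ r) : MonotoneOn (rf · r) (Set.Ioi 0) := by
  intro x (hx : 0 < x) y (hy : 0 < y) hxy
  have hΓ {z : ℝ} (hz : 0 < z) : 0 < Real.Gamma z := Real.Gamma_pos_of_pos hz
  have hxr : 0 < x + r := by linarith
  have hyr : 0 < y + r := by linarith
  have hlog := map_add_add_map_le_of_convexOn Real.convexOn_log_Gamma hx hyr hxy hr
  simp only [Function.comp_apply] at hlog
  rw [← Real.log_mul (hΓ hxr).ne' (hΓ hy).ne', ← Real.log_mul (hΓ hx).ne' (hΓ hyr).ne',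
    Real.log_le_log_iff (mul_pos (hΓ hxr) (hΓ hy)) (mul_pos (hΓ hx) (hΓ hyr))] at hlog
  simp only [rf_eq_Gamma_div_Gamma]
  rwa [div_le_div_iff₀ (hΓ hx) (hΓ hy), mul_comm (Real.Gamma (y + r))]

theorem antitoneOn_rf_left {r : ℝ} (hr : r ≤ 0) : AntitoneOn (rf · r) (Set.Ioi (-r)) := by
  intro x (hx : -r < x) y (hy : -r < y) hxy
  have hxr : 0 < x + r := by linarith
  have hyr : 0 < y + r := by linarith
  have hmono : rf (x + r) (-r) ≤ rf (y + r) (-r) :=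
    monotoneOn_rf_left (neg_nonneg.2 hr) hxr hyr (by linarith)
  simp only [rf_eq_inv_rf_neg _ r]
  exact inv_anti₀ (rf_pos hxr (by linarith)) hmono

section Diagonal

variable {a b : ℤ} {α : ℝ}

theorem Gl_self (a b s : ℤ) (hα : 0 < α) :
    Gl a b α s s = rf (b - s + 1) (α - 1) * rf (s - a) (α - 2) /
      (Real.Gamma α * rf (b - a) (α - 2)) - 1 := by
  have hΓ : Real.Gamma α ≠ 0 := (Real.Gamma_pos_of_pos hα).ne'
  rw [Gl, if_neg (by lia), sub_self, zero_add, rf_one_left, add_sub_cancel, mul_sub,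
    one_div_mul_cancel hΓ, one_div, inv_mul_eq_div, div_div, mul_comm (rf (b - a) (α - 2))]

theorem antitoneOn_Gl_self (hα1 : 1 < α) (hα2 : α ≤ 2) :
    AntitoneOn (fun s ↦ Gl a b α s s) (Set.Icc (a + 1) b) := by
  intro s hs t ht hst
  have has : (a + 1 : ℝ) ≤ s := mod_cast hs.1
  have hst' : (s : ℝ) ≤ t := mod_cast hst
  have htb : (t : ℝ) ≤ b := mod_cast ht.2
  have hleft : rf (b - t + 1) (α - 1) ≤ rf (b - s + 1) (α - 1) :=
    monotoneOn_rf_left (by linarith) (Set.mem_Ioi.2 (by linarith)) (Set.mem_Ioi.2 (by linarith))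
      (by linarith)
  have hright : rf (t - a) (α - 2) ≤ rf (s - a) (α - 2) :=
    antitoneOn_rf_left (by linarith) (Set.mem_Ioi.2 (by linarith)) (Set.mem_Ioi.2 (by linarith))
      (by linarith)
  have hleft_pos : 0 < rf (b - s + 1) (α - 1) := rf_pos (by linarith) (by linarith)
  have hright_pos : 0 < rf (t - a) (α - 2) := rf_pos (by linarith) (by linarith)
  have hden_pos : 0 < Real.Gamma α * rf (b - a) (α - 2) :=
    mul_pos (Real.Gamma_pos_of_pos (by linarith)) (rf_pos (by linarith) (by linarith))
  simp only [Gl_self a b _ (zero_lt_one.trans hα1)]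
  gcongr

theorem Gl_self_add_two (hab : 2 ≤ b - a) (hα : 0 < α) :
    Gl a b α (a + 2) (a + 2) = b - a - 2 := by
  have hab' : (2 : ℝ) ≤ b - a := mod_cast hab
  have hΓ : Real.Gamma α ≠ 0 := (Real.Gamma_pos_of_pos hα).ne'
  have hden : rf (b - a) (α - 2) ≠ 0 := (rf_pos (by linarith) (by linarith)).ne'
  have hleft : rf (b - (a + 2) + 1) (α - 1) = (b - a - 1) * rf (b - a) (α - 2) := by
    have hb : (b - (a + 2) + 1 : ℝ) = b - a - 1 := by ring
    have hα : α - 1 = α - 2 + 1 := by ring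
    rw [hb, hα, rf_add_one_right (by linarith), sub_add_cancel]
  have hright : rf (a + 2 - a) (α - 2) = Real.Gamma α := by
    rw [add_sub_cancel_left, rf_two_left, add_sub_cancel]
  rw [Gl_self a b _ hα]
  push_cast
  rw [hleft, hright, mul_assoc, mul_comm (Real.Gamma α),
    mul_div_cancel_right₀ _ (mul_ne_zero hden hΓ)]
  ring

end Diagonal

theorem left_focal_green_diagonal (a b : ℤ) (hab : 2 ≤ b - a) (α : ℝ)
    (hα1 : 1 < α) (hα2 : α < 2) :
    (∀ s : ℤ, a + 2 ≤ s → s ≤ b → Gl a b α s s ≤ (b - a - 2 : ℝ)) ∧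
    Gl a b α (a + 2) (a + 2) = (b - a - 2 : ℝ) := by
  have hmax := Gl_self_add_two hab (zero_lt_one.trans hα1)
  refine ⟨fun s has hsb ↦ ?_, hmax⟩
  rw [← hmax]
  exact antitoneOn_Gl_self hα1 hα2.le ⟨by lia, by lia⟩ ⟨by lia, hsb⟩ has
end

section
/- For all (t, s) with a+1 ≤ t ≤ b and a+2 ≤ s ≤ b, the right-focal Green's function satisfies the bound G_r(t, s) ≤ rf(b−a−1, α−1)/Γ(α). -/
/-- The right-focal Green's function. -/
noncomputable def Gr (a : ℤ) (α : ℝ) (t s : ℤ) : ℝ :=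
  if t ≤ s - 1 then
    (1 / Real.Gamma α) * rf (t - a - 1 : ℝ) (α - 1)
  else
    (1 / Real.Gamma α) * (rf (t - a - 1 : ℝ) (α - 1) - rf (t - s + 1 : ℝ) (α - 1))

/-!
Since `log ∘ Γ` is convex on `(0, ∞)`, its increments `log Γ(x + r) - log Γ(x)` over a fixed step
`r ≥ 0` grow with `x`, so `x ↦ rf x r` is monotone on `[0, ∞)`. The term subtracted in the second
branch of the Green's function is nonnegative, hence `Gr a α t s` is at most its first branch, which
is largest at `t = b`.
-/

theorem convexOn_map_add_map_swap_le {𝕜 E β : Type*} [Semiring 𝕜] [PartialOrder 𝕜]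
    [AddCommMonoid E] [SMul 𝕜 E] [AddCommMonoid β] [PartialOrder β] [IsOrderedAddMonoid β]
    [Module 𝕜 β] {S : Set E} {f : E → β} (hf : ConvexOn 𝕜 S f) {x z : E} (hx : x ∈ S) (hz : z ∈ S)
    {p q : 𝕜} (hp : 0 ≤ p) (hq : 0 ≤ q) (hpq : p + q = 1) :
    f (p • x + q • z) + f (q • x + p • z) ≤ f x + f z :=
  calc
    f (p • x + q • z) + f (q • x + p • z)
    _ ≤ (p • f x + q • f z) + (q • f x + p • f z) :=
      add_le_add (hf.2 hx hz hp hq hpq) (hf.2 hx hz hq hp (by rw [add_comm, hpq]))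
    _ = (p + q) • f x + (p + q) • f z := by simp only [add_smul]; abel
    _ = f x + f z := by rw [hpq, one_smul, one_smul]

theorem convexOn_map_add_sub_map_le {𝕜 β : Type*} [Field 𝕜] [LinearOrder 𝕜]
    [IsStrictOrderedRing 𝕜] [AddCommGroup β] [PartialOrder β] [IsOrderedAddMonoid β] [Module 𝕜 β]
    {S : Set 𝕜} {f : 𝕜 → β} (hf : ConvexOn 𝕜 S f) {x y r : 𝕜} (hx : x ∈ S) (hyr : y + r ∈ S)
    (hxy : x ≤ y) (hr : 0 ≤ r) :
    f (x + r) - f x ≤ f (y + r) - f y := by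
  rcases hxy.eq_or_lt with rfl | hlt
  · rfl
  have hd : 0 < y - x + r := by linarith
  -- `x + r` and `y` divide the segment from `x` to `y + r` in mirrored proportions.
  have hswap := convexOn_map_add_map_swap_le hf hx hyr (p := (y - x) / (y - x + r))
    (q := r / (y - x + r)) (div_nonneg (sub_nonneg.2 hxy) hd.le) (div_nonneg hr hd.le)
    (by rw [← add_div, div_self hd.ne'])
  have hleft : ((y - x) / (y - x + r)) • x + (r / (y - x + r)) • (y + r) = x + r := by
    simp only [smul_eq_mul]; field_simp; ring
  have hright : (r / (y - x + r)) • x + ((y - x) / (y - x + r)) • (y + r) = y := by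
    simp only [smul_eq_mul]; field_simp; ring
  rw [hleft, hright] at hswap
  rwa [sub_le_sub_iff, add_comm (f (y + r))]

theorem Gamma_add_div_Gamma_le {x y r : ℝ} (hx : 0 < x) (hxy : x ≤ y) (hr : 0 ≤ r) :
    Real.Gamma (x + r) / Real.Gamma x ≤ Real.Gamma (y + r) / Real.Gamma y := by
  have hy : 0 < y := hx.trans_le hxy
  have hxr : 0 < x + r := by positivity
  have hyr : 0 < y + r := by positivity
  have hΓx := Real.Gamma_pos_of_pos hx
  have hΓy := Real.Gamma_pos_of_pos hy
  have hΓxr := Real.Gamma_pos_of_pos hxr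
  have hΓyr := Real.Gamma_pos_of_pos hyr
  rw [← Real.log_le_log_iff (div_pos hΓxr hΓx) (div_pos hΓyr hΓy),
    Real.log_div hΓxr.ne' hΓx.ne', Real.log_div hΓyr.ne' hΓy.ne']
  exact convexOn_map_add_sub_map_le Real.convexOn_log_Gamma hx hyr hxy hr

theorem rf_of_ne_zero {x : ℝ} (hx : x ≠ 0) (r : ℝ) :
    rf x r = Real.Gamma (x + r) / Real.Gamma x :=
  if_neg hx

theorem rf_zero_left (r : ℝ) : rf 0 r = 0 :=
  if_pos rfl

theorem rf_nonneg {x r : ℝ} (hx : 0 ≤ x) (hxr : 0 ≤ x + r) : 0 ≤ rf x r := by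
  rcases eq_or_ne x 0 with rfl | hx0
  · exact (rf_zero_left r).ge
  · rw [rf_of_ne_zero hx0]
    exact div_nonneg (Real.Gamma_nonneg_of_nonneg hxr) (Real.Gamma_nonneg_of_nonneg hx)

theorem rf_monotoneOn {r : ℝ} (hr : 0 ≤ r) : MonotoneOn (rf · r) (Set.Ici 0) := by
  intro x (hx : 0 ≤ x) y (hy : 0 ≤ y) hxy
  change rf x r ≤ rf y r
  rcases hx.eq_or_lt with rfl | hx
  · rw [rf_zero_left]
    exact rf_nonneg hy (add_nonneg hy hr)
  · rw [rf_of_ne_zero hx.ne', rf_of_ne_zero (hx.trans_le hxy).ne']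
    exact Gamma_add_div_Gamma_le hx hxy hr

theorem Gr_le_rf_div_Gamma {α : ℝ} (hα : 0 < α) (a t s : ℤ) :
    Gr a α t s ≤ rf (t - a - 1 : ℝ) (α - 1) / Real.Gamma α := by
  rw [div_eq_inv_mul, ← one_div, Gr]
  split_ifs with hts
  · rfl
  · have hst : (s : ℝ) ≤ t := by exact_mod_cast (by lia : s ≤ t)
    have hrf : 0 ≤ rf (t - s + 1 : ℝ) (α - 1) := rf_nonneg (by linarith) (by linarith)
    have hΓ : 0 ≤ 1 / Real.Gamma α := one_div_nonneg.2 (Real.Gamma_pos_of_pos hα).le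
    exact mul_le_mul_of_nonneg_left (sub_le_self _ hrf) hΓ

theorem right_focal_green_bound_general {a b t : ℤ} {α : ℝ} (hα : 1 ≤ α) (hat : a + 1 ≤ t)
    (htb : t ≤ b) (s : ℤ) :
    Gr a α t s ≤ rf (b - a - 1 : ℝ) (α - 1) / Real.Gamma α := by
  have hα0 : 0 < α := one_pos.trans_le hα
  have hat' : (a : ℝ) + 1 ≤ t := by exact_mod_cast hat
  have htb' : (t : ℝ) ≤ b := by exact_mod_cast htb
  have hrf : rf (t - a - 1 : ℝ) (α - 1) ≤ rf (b - a - 1 : ℝ) (α - 1) :=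
    rf_monotoneOn (sub_nonneg.2 hα) (Set.mem_Ici.2 (by linarith)) (Set.mem_Ici.2 (by linarith))
      (by linarith)
  exact (Gr_le_rf_div_Gamma hα0 a t s).trans
    (div_le_div_of_nonneg_right hrf (Real.Gamma_pos_of_pos hα0).le)

theorem right_focal_green_bound (a b : ℤ) (hab : 2 ≤ b - a) (α : ℝ)
    (hα1 : 1 < α) (hα2 : α < 2) :
    ∀ t s : ℤ, a + 1 ≤ t → t ≤ b → a + 2 ≤ s → s ≤ b →
      Gr a α t s ≤ rf (b - a - 1 : ℝ) (α - 1) / Real.Gamma α := by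
  intro t s hat htb _ _
  exact right_focal_green_bound_general hα1.le hat htb s
end
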